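/- Let λ > 0, r > 0, Ψ > 0, and Φ, Θ ∈ ℝ, and set k₀ = 2π/λ and f_n(x, z) = ((x − Φ)² + Ψ² + (z − Θ)²)^{−n/2}. Then as a and b both tend to infinity, (Ψ/(4π)) · ∬_{[−a,a]×[−b,b]} ( f₃(x, z) − (1/(k₀² r²)) f₅(x, z) + (1/(k₀⁴ r⁴)) f₇(x, z) ) dx dz converges to 1/2 − λ²/(24 π² r² Ψ²) + λ⁴/(160 π⁴ r⁴ Ψ⁴). -/

import Mathlib

open Real MeasureTheory Filter Topology

/-!
The integrand is absolutely integrable on the plane, so the integrals over growing rectangles tend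
to the integral over the whole plane. There, translation moves the centre `(Φ, Θ)` to the origin and
the kernels become functions of the norm alone. In dimension two the radial density is `t dt`, which
makes `t (t² + c)^(-s)` the derivative of `(t² + c)^(1 - s) / (2 (1 - s))`. This explicit primitive
vanishes at infinity for `s > 1`, and so gives both the integrability and the value of the integral.
-/

section Rectangles

variable {ι : Type*} {l : Filter ι}

theorem aecover_prod {α β : Type*} [MeasurableSpace α] [MeasurableSpace β]
    {μ : Measure α} {ν : Measure β} {φ : ι → Set α} {ψ : ι → Set β}
    (hφ : AECover μ l φ) (hψ : AECover ν l ψ) :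
    AECover (μ.prod ν) l fun i => φ i ×ˢ ψ i where
  ae_eventually_mem := by
    filter_upwards [Measure.quasiMeasurePreserving_fst.ae hφ.ae_eventually_mem,
      Measure.quasiMeasurePreserving_snd.ae hψ.ae_eventually_mem] with p hp₁ hp₂
    exact hp₁.and hp₂
  measurableSet i := (hφ.measurableSet i).prod (hψ.measurableSet i)

theorem intervalIntegral_intervalIntegral_tendsto_integral_prod {E : Type*}
    [NormedAddCommGroup E] [NormedSpace ℝ E] [l.IsCountablyGenerated]
    {μ ν : Measure ℝ} [SFinite μ] [SFinite ν] {F : ℝ × ℝ → E} (hF : Integrable F (μ.prod ν))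
    {a b c d : ι → ℝ} (ha : Tendsto a l atBot) (hb : Tendsto b l atTop)
    (hc : Tendsto c l atBot) (hd : Tendsto d l atTop) :
    Tendsto (fun i => ∫ x in a i..b i, ∫ y in c i..d i, F (x, y) ∂ν ∂μ) l
      (𝓝 (∫ p, F p ∂μ.prod ν)) := by
  have hcover := aecover_prod (aecover_Ioc (μ := μ) ha hb) (aecover_Ioc (μ := ν) hc hd)
  refine (hcover.integral_tendsto_of_countably_generated hF).congr' ?_
  filter_upwards [ha.eventually_le_atBot 0, hb.eventually_ge_atTop 0, hc.eventually_le_atBot 0,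
    hd.eventually_ge_atTop 0] with i hai hbi hci hdi
  simp only [intervalIntegral.integral_of_le (hai.trans hbi),
    intervalIntegral.integral_of_le (hci.trans hdi)]
  exact setIntegral_prod F hF.integrableOn

end Rectangles

section Radial

variable {c s : ℝ}

theorem hasDerivAt_sq_add_rpow_div (hc : 0 < c) (hs : s ≠ 1) (t : ℝ) :
    HasDerivAt (fun t : ℝ => (t ^ 2 + c) ^ (1 - s) / (2 * (1 - s))) (t * (t ^ 2 + c) ^ (-s)) t := by
  have hs' : 1 - s ≠ 0 := sub_ne_zero.2 hs.symm
  have hbase : HasDerivAt (fun t : ℝ => t ^ 2 + c) (2 * t) t := by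
    simpa using (hasDerivAt_pow 2 t).add_const c
  have hbase_ne : t ^ 2 + c ≠ 0 := by positivity
  refine ((hbase.rpow_const (p := 1 - s) (.inl hbase_ne)).div_const (2 * (1 - s))).congr_deriv ?_
  rw [show 1 - s - 1 = -s by ring]
  field_simp

theorem tendsto_sq_add_rpow_div_atTop (c : ℝ) (hs : 1 < s) :
    Tendsto (fun t : ℝ => (t ^ 2 + c) ^ (1 - s) / (2 * (1 - s))) atTop (𝓝 0) := by
  have hbase : Tendsto (fun t : ℝ => t ^ 2 + c) atTop atTop :=
    tendsto_atTop_add_const_right _ _ (tendsto_pow_atTop two_ne_zero)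
  simpa [Function.comp_def] using
    ((tendsto_rpow_neg_atTop (sub_pos.2 hs)).comp hbase).div_const (2 * (1 - s))

theorem integrableOn_Ioi_mul_sq_add_rpow_neg (hc : 0 < c) (hs : 1 < s) :
    IntegrableOn (fun t : ℝ => t * (t ^ 2 + c) ^ (-s)) (Set.Ioi 0) :=
  integrableOn_Ioi_deriv_of_nonneg' (fun t _ => hasDerivAt_sq_add_rpow_div hc hs.ne' t)
    (fun t (ht : 0 < t) => by positivity) (tendsto_sq_add_rpow_div_atTop c hs)

theorem integral_Ioi_mul_sq_add_rpow_neg (hc : 0 < c) (hs : 1 < s) :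
    ∫ t in Set.Ioi (0 : ℝ), t * (t ^ 2 + c) ^ (-s) = c ^ (1 - s) / (2 * (s - 1)) := by
  rw [integral_Ioi_of_hasDerivAt_of_tendsto'
    (fun t _ => hasDerivAt_sq_add_rpow_div hc hs.ne' t)
    (integrableOn_Ioi_mul_sq_add_rpow_neg hc hs) (tendsto_sq_add_rpow_div_atTop c hs)]
  rw [← neg_sub s 1, mul_neg, div_neg, sub_neg_eq_add]
  simp

end Radial

section FinrankTwo

variable {E : Type*} [NormedAddCommGroup E] [NormedSpace ℝ E] [MeasurableSpace E] [BorelSpace E]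
  (μ : Measure E) [μ.IsAddHaarMeasure] {c s : ℝ}

theorem integrable_norm_sub_sq_add_rpow_neg (hE : Module.finrank ℝ E = 2) (hc : 0 < c)
    (hs : 1 < s) (w : E) : Integrable (fun x => (‖x - w‖ ^ 2 + c) ^ (-s)) μ := by
  have := Module.finite_of_finrank_eq_succ hE
  have := Module.nontrivial_of_finrank_eq_succ hE
  have hcentred : Integrable (fun x : E => (‖x‖ ^ 2 + c) ^ (-s)) μ := by
    rw [integrable_fun_norm_addHaar μ (f := fun t => (t ^ 2 + c) ^ (-s)), hE]
    simpa using integrableOn_Ioi_mul_sq_add_rpow_neg hc hs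
  exact hcentred.comp_sub_right w

theorem integral_norm_sub_sq_add_rpow_neg (hE : Module.finrank ℝ E = 2) (hc : 0 < c)
    (hs : 1 < s) (w : E) :
    ∫ x, (‖x - w‖ ^ 2 + c) ^ (-s) ∂μ = μ.real (Metric.ball 0 1) * (c ^ (1 - s) / (s - 1)) := by
  have := Module.finite_of_finrank_eq_succ hE
  have := Module.nontrivial_of_finrank_eq_succ hE
  rw [integral_sub_right_eq_self (fun x : E => (‖x‖ ^ 2 + c) ^ (-s)) w,
    integral_fun_norm_addHaar μ (fun t => (t ^ 2 + c) ^ (-s)), hE]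
  simp only [Nat.add_one_sub_one, pow_one, smul_eq_mul, nsmul_eq_mul, Nat.cast_ofNat,
    integral_Ioi_mul_sq_add_rpow_neg hc hs]
  have : s - 1 ≠ 0 := (sub_pos.2 hs).ne'
  field_simp

end FinrankTwo

section Plane

/-- The paper's kernel `f_α`: the `-α`-th power of the distance between the point `(p.1, 0, p.2)` of
the array plane and the user at `(Φ, Ψ, Θ)`, lengths being measured in units of the propagation
distance. It is encoded as a real power of the squared distance, so `α` need not be an integer. -/
noncomputable def planarKernel (Φ Ψ Θ α : ℝ) (p : ℝ × ℝ) : ℝ :=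
  ((p.1 - Φ) ^ 2 + Ψ ^ 2 + (p.2 - Θ) ^ 2) ^ (-(α / 2))

theorem planarKernel_re_im (Φ Ψ Θ α : ℝ) (z : ℂ) :
    planarKernel Φ Ψ Θ α (z.re, z.im) = (‖z - ⟨Φ, Θ⟩‖ ^ 2 + Ψ ^ 2) ^ (-(α / 2)) := by
  rw [planarKernel, Complex.sq_norm, Complex.normSq_apply, Complex.sub_re, Complex.sub_im]
  congr 1
  ring

variable {Ψ α : ℝ}

theorem integrable_planarKernel (hΨ : Ψ ≠ 0) (hα : 2 < α) (Φ Θ : ℝ) :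
    Integrable (planarKernel Φ Ψ Θ α) := by
  have hcomplex : Integrable fun z : ℂ => planarKernel Φ Ψ Θ α (z.re, z.im) := by
    simp only [planarKernel_re_im]
    exact integrable_norm_sub_sq_add_rpow_neg _ Complex.finrank_real_complex
      (sq_pos_of_ne_zero hΨ) ((one_lt_div two_pos).2 hα) _
  exact (Complex.volume_preserving_equiv_real_prod.integrable_comp_emb
    Complex.measurableEquivRealProd.measurableEmbedding).1 hcomplex

theorem integral_planarKernel (hΨ : 0 < Ψ) (hα : 2 < α) (Φ Θ : ℝ) :
    ∫ p, planarKernel Φ Ψ Θ α p = 2 * π / ((α - 2) * Ψ ^ (α - 2)) := by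
  have hpow : (Ψ ^ 2) ^ (1 - α / 2) = (Ψ ^ (α - 2))⁻¹ := by
    rw [← rpow_natCast_mul hΨ.le, ← rpow_neg hΨ.le]
    congr 1
    push_cast
    ring
  have hball : volume.real (Metric.ball (0 : ℂ) 1) = π := by simp [measureReal_def]
  calc ∫ p, planarKernel Φ Ψ Θ α p = ∫ z : ℂ, planarKernel Φ Ψ Θ α (z.re, z.im) :=
        (Complex.volume_preserving_equiv_real_prod.integral_comp
          Complex.measurableEquivRealProd.measurableEmbedding _).symm
    _ = ∫ z : ℂ, (‖z - ⟨Φ, Θ⟩‖ ^ 2 + Ψ ^ 2) ^ (-(α / 2)) := by simp only [planarKernel_re_im]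
    _ = π * ((Ψ ^ 2) ^ (1 - α / 2) / (α / 2 - 1)) := by
        rw [← hball]
        exact integral_norm_sub_sq_add_rpow_neg _ Complex.finrank_real_complex (pow_pos hΨ 2)
          ((one_lt_div two_pos).2 hα) _
    _ = 2 * π / ((α - 2) * Ψ ^ (α - 2)) := by
        have : α - 2 ≠ 0 := (sub_pos.2 hα).ne'
        rw [hpow, show α / 2 - 1 = (α - 2) / 2 by ring]
        field_simp

theorem tendsto_intervalIntegral_planarKernel_sub_add (hΨ : 0 < Ψ) (Φ Θ A B : ℝ) :
    Tendsto
      (fun p : ℝ × ℝ => ∫ x in (-p.1)..p.1, ∫ z in (-p.2)..p.2,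
        (planarKernel Φ Ψ Θ 3 (x, z) - A * planarKernel Φ Ψ Θ 5 (x, z) +
          B * planarKernel Φ Ψ Θ 7 (x, z)))
      (atTop ×ˢ atTop)
      (𝓝 (2 * π / Ψ - A * (2 * π / (3 * Ψ ^ 3)) + B * (2 * π / (5 * Ψ ^ 5)))) := by
  have hf₃ := integrable_planarKernel hΨ.ne' (α := 3) (by norm_num) Φ Θ
  have hf₅ := (integrable_planarKernel hΨ.ne' (α := 5) (by norm_num) Φ Θ).const_mul A
  have hf₇ := (integrable_planarKernel hΨ.ne' (α := 7) (by norm_num) Φ Θ).const_mul B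
  have hf₃₅ : Integrable fun p => planarKernel Φ Ψ Θ 3 p - A * planarKernel Φ Ψ Θ 5 p :=
    hf₃.sub hf₅
  have hvalue : ∫ p, (planarKernel Φ Ψ Θ 3 p - A * planarKernel Φ Ψ Θ 5 p +
      B * planarKernel Φ Ψ Θ 7 p) =
      2 * π / Ψ - A * (2 * π / (3 * Ψ ^ 3)) + B * (2 * π / (5 * Ψ ^ 5)) := by
    rw [integral_add hf₃₅ hf₇, integral_sub hf₃ hf₅,
      integral_const_mul, integral_const_mul, integral_planarKernel hΨ (by norm_num),
      integral_planarKernel hΨ (by norm_num), integral_planarKernel hΨ (by norm_num)]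
    norm_num
  rw [← hvalue]
  exact intervalIntegral_intervalIntegral_tendsto_integral_prod (hf₃₅.add hf₇)
    (tendsto_neg_atTop_atBot.comp tendsto_fst) tendsto_fst
    (tendsto_neg_atTop_atBot.comp tendsto_snd) tendsto_snd

end Plane

/-- Core of Theorem 2 of the paper: with `k₀ = 2π/λ` and
`fₙ(x,z) = ((x - Φ)² + Ψ² + (z - Θ)²)^{-n/2}`, as `a, b → ∞`,
`(Ψ/(4π)) ∬_{[-a,a]×[-b,b]} (f₃ - f₅/(k₀²r²) + f₇/(k₀⁴r⁴)) dx dz`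
converges to `1/2 - λ²/(24π²r²Ψ²) + λ⁴/(160π⁴r⁴Ψ⁴)`. -/
theorem stmt_5 (lam r Ψ Φ Θ k₀ : ℝ) (hlam : 0 < lam) (hr : 0 < r) (hΨ : 0 < Ψ)
    (hk : k₀ = 2 * π / lam) :
    Filter.Tendsto
      (fun p : ℝ × ℝ =>
        Ψ / (4 * π) *
          ∫ x in (-p.1)..p.1, ∫ z in (-p.2)..p.2,
            (((x - Φ) ^ 2 + Ψ ^ 2 + (z - Θ) ^ 2) ^ (-(3 / 2 : ℝ)) -
              (1 / (k₀ ^ 2 * r ^ 2)) *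
                ((x - Φ) ^ 2 + Ψ ^ 2 + (z - Θ) ^ 2) ^ (-(5 / 2 : ℝ)) +
              (1 / (k₀ ^ 4 * r ^ 4)) *
                ((x - Φ) ^ 2 + Ψ ^ 2 + (z - Θ) ^ 2) ^ (-(7 / 2 : ℝ))))
      (Filter.atTop ×ˢ Filter.atTop)
      (𝓝 (1 / 2 - lam ^ 2 / (24 * π ^ 2 * r ^ 2 * Ψ ^ 2) +
        lam ^ 4 / (160 * π ^ 4 * r ^ 4 * Ψ ^ 4))) := by
  have hvalue : 1 / 2 - lam ^ 2 / (24 * π ^ 2 * r ^ 2 * Ψ ^ 2) +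
      lam ^ 4 / (160 * π ^ 4 * r ^ 4 * Ψ ^ 4) =
      Ψ / (4 * π) * (2 * π / Ψ - 1 / (k₀ ^ 2 * r ^ 2) * (2 * π / (3 * Ψ ^ 3)) +
        1 / (k₀ ^ 4 * r ^ 4) * (2 * π / (5 * Ψ ^ 5))) := by
    rw [hk]
    field_simp
    ring
  rw [hvalue]
  exact (tendsto_intervalIntegral_planarKernel_sub_add hΨ Φ Θ _ _).const_mul _
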